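/- The Dirichlet Laplacian on the rounded broken guide Γ^♯ has a bound state below π²: there exists a nonzero ψ ∈ H¹₀(Γ^♯) such that ∫_{Γ^♯}|∇ψ|²dx < π² ∫_{Γ^♯}|ψ|²dx; consequently λ₁(Γ^♯) := inf{∫_{Γ^♯}|∇u|²dx / ∫_{Γ^♯}|u|²dx : 0≠u∈H¹₀(Γ^♯)} < π². -/

import Mathlib

/-!
Let `d` be the distance to the quadrant, `m = max (x 0) (x 1)` the position along the legs, and
`κ` a cutoff equal to `1` on `(-∞, 0]`. The trial function is
`u = sin (π d) κ(m / L) + ε sin (2π d) κ(m)`. The mode `sin (π d)` has zero energy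
`∫ |∇u|² - π² u²` over the quarter disc and over every cross-section of the legs, so its only cost
is that of the long cutoff, of order `1 / L`. The second mode is orthogonal to the first on
cross-sections of the legs, but on the quarter disc the weight `r dr` couples them, and this changes
the energy by `-(4π / 3) ε + O(ε²)`: for suitable `ε` and large `L` the energy is negative.
Finally `u` vanishes on the boundary, so discarding its small values makes the support compact at
an arbitrarily small price.
-/

noncomputable section
open MeasureTheory Set Real

/-- The open first quadrant `(ℝ₊)²` in the Euclidean plane. -/
def Quad : Set (EuclideanSpace ℝ (Fin 2)) := {x | 0 < x 0 ∧ 0 < x 1}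

/-- The broken guide with rounded outer corner
`Γ♯ = {x ∈ ℝ² ∖ closure((ℝ₊)²) : dist(x, ∂(ℝ₊)²) < 1}`. -/
def GamSharp : Set (EuclideanSpace ℝ (Fin 2)) :=
  {x | x ∉ closure Quad ∧ Metric.infDist x (frontier Quad) < 1}

/-- First Rayleigh quotient `λ₁(Γ♯)` of the Dirichlet Laplacian on `Γ♯`
(infimum over the dense class of `C¹` compactly supported functions in `Γ♯`;
note that on Euclidean space `‖fderiv ℝ u x‖² = |∇u(x)|²`). -/
def lamGamSharp : ℝ :=
  sInf {r | ∃ u : EuclideanSpace ℝ (Fin 2) → ℝ, ContDiff ℝ 1 u ∧ HasCompactSupport u ∧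
    tsupport u ⊆ GamSharp ∧ (∫ x in GamSharp, (u x) ^ 2) ≠ 0 ∧
    r = (∫ x in GamSharp, ‖fderiv ℝ u x‖ ^ 2) / ∫ x in GamSharp, (u x) ^ 2}

open Filter Topology

local notation "ℝ²" => EuclideanSpace ℝ (Fin 2)

/-! ### Cutting off small values -/

/-- A `C¹` function vanishing on `[-1, 1]` and equal to the identity outside `(-2, 2)`; composing
with it cuts off small values. -/
def deadZone (s : ℝ) : ℝ := s * smoothTransition (s ^ 2 - 1)

lemma deadZone_of_abs_le_one {s : ℝ} (hs : |s| ≤ 1) : deadZone s = 0 := by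
  rw [deadZone, smoothTransition.zero_of_nonpos (sub_nonpos.2 <| (sq_le_one_iff_abs_le_one s).2 hs),
    mul_zero]

lemma deadZone_of_two_le_abs {s : ℝ} (hs : 2 ≤ |s|) : deadZone s = s := by
  have : 2 ^ 2 ≤ s ^ 2 := sq_le_sq.2 (by rwa [abs_two])
  rw [deadZone, smoothTransition.one_of_one_le (by linarith), mul_one]

lemma abs_deadZone_le (s : ℝ) : |deadZone s| ≤ |s| := by
  rw [deadZone, abs_mul, abs_of_nonneg (smoothTransition.nonneg _)]
  exact mul_le_of_le_one_right (abs_nonneg s) (smoothTransition.le_one _)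

lemma contDiff_deadZone : ContDiff ℝ 1 deadZone :=
  contDiff_id.mul (smoothTransition.contDiff.comp ((contDiff_id.pow 2).sub contDiff_const))

lemma deriv_deadZone_of_two_lt_abs {s : ℝ} (hs : 2 < |s|) : deriv deadZone s = 1 := by
  have h : deadZone =ᶠ[𝓝 s] id := by
    filter_upwards [continuous_abs.continuousAt.eventually_const_lt hs] with t ht
    exact deadZone_of_two_le_abs ht.le
  rw [h.deriv_eq, deriv_id]

lemma deriv_deadZone_zero : deriv deadZone 0 = 0 := by
  have h : deadZone =ᶠ[𝓝 0] fun _ => 0 := by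
    filter_upwards [Metric.closedBall_mem_nhds (0 : ℝ) one_pos] with t ht
    exact deadZone_of_abs_le_one (by simpa using ht)
  rw [h.deriv_eq, deriv_const]

lemma exists_abs_deriv_deadZone_le : ∃ C, ∀ s, |deriv deadZone s| ≤ C := by
  obtain ⟨C, hC⟩ := (isCompact_Icc (a := (-2 : ℝ)) (b := 2)).exists_bound_of_continuousOn
    (contDiff_deadZone.continuous_deriv le_rfl).continuousOn
  refine ⟨max C 1, fun s => ?_⟩
  rcases le_or_gt |s| 2 with hs | hs
  · exact (hC s (abs_le.1 hs)).trans (le_max_left _ _)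
  · rw [deriv_deadZone_of_two_lt_abs hs, abs_one]
    exact le_max_right _ _

lemma eventually_lt_abs_div {s : ℝ} (hs : s ≠ 0) (C : ℝ) : ∀ᶠ δ in 𝓝[>] (0 : ℝ), C < |s / δ| := by
  have h : Tendsto (fun δ => |s| * δ⁻¹) (𝓝[>] 0) atTop :=
    tendsto_inv_nhdsGT_zero.const_mul_atTop (abs_pos.2 hs)
  filter_upwards [h.eventually_gt_atTop C, self_mem_nhdsWithin] with δ hδ hpos
  rwa [abs_div, abs_of_pos (mem_Ioi.1 hpos), div_eq_mul_inv]

section Truncation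

/-- The function `u` on `Ω` with its values of size at most `δ` removed, extended by zero. -/
def truncate {X : Type*} (Ω : Set X) (u : X → ℝ) (δ : ℝ) : X → ℝ :=
  Ω.indicator fun x => δ * deadZone (u x / δ)

lemma tsupport_truncate_subset {X : Type*} [TopologicalSpace X] {Ω : Set X} {u : X → ℝ} {δ : ℝ}
    (hδ : 0 < δ) (hK : IsClosed {x ∈ Ω | δ ≤ |u x|}) :
    tsupport (truncate Ω u δ) ⊆ {x ∈ Ω | δ ≤ |u x|} := by
  refine closure_minimal (fun x hx => ?_) hK
  have hxΩ : x ∈ Ω := mem_of_indicator_ne_zero hx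
  refine ⟨hxΩ, not_lt.1 fun hlt => hx ?_⟩
  rw [truncate, indicator_of_mem hxΩ, deadZone_of_abs_le_one, mul_zero]
  rw [abs_div, abs_of_pos hδ]
  exact div_le_one_of_le₀ hlt.le hδ.le

lemma truncate_eventuallyEq {X : Type*} [TopologicalSpace X] {Ω : Set X} (hΩ : IsOpen Ω)
    (u : X → ℝ) (δ : ℝ) {x : X} (hx : x ∈ Ω) :
    truncate Ω u δ =ᶠ[𝓝 x] fun y => δ * deadZone (u y / δ) := by
  filter_upwards [hΩ.mem_nhds hx] with y hy using indicator_of_mem hy _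

lemma integral_truncate_sq {X : Type*} [MeasurableSpace X] {μ : Measure X} {Ω : Set X}
    (hΩ : MeasurableSet Ω) (u : X → ℝ) (δ : ℝ) :
    ∫ x, truncate Ω u δ x ^ 2 ∂μ = ∫ x in Ω, (δ * deadZone (u x / δ)) ^ 2 ∂μ := by
  rw [← integral_indicator hΩ]
  congr 1 with x
  by_cases hx : x ∈ Ω <;> simp [truncate, hx]

lemma tendsto_integral_truncate_sq {X : Type*} [TopologicalSpace X] [MeasurableSpace X]
    [OpensMeasurableSpace X] {μ : Measure X} {Ω : Set X} {u : X → ℝ}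
    (hΩ : MeasurableSet Ω) (hu : ContinuousOn u Ω) (hint : IntegrableOn (fun x => u x ^ 2) Ω μ) :
    Tendsto (fun δ => ∫ x, truncate Ω u δ x ^ 2 ∂μ) (𝓝[>] 0) (𝓝 (∫ x in Ω, u x ^ 2 ∂μ)) := by
  simp_rw [integral_truncate_sq hΩ]
  refine tendsto_integral_filter_of_dominated_convergence (fun x => u x ^ 2) ?_ ?_ hint ?_
  · refine .of_forall fun δ => ContinuousOn.aestronglyMeasurable ?_ hΩ
    exact (continuousOn_const.mul
      (contDiff_deadZone.continuous.comp_continuousOn (hu.div_const δ))).pow 2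
  · filter_upwards [self_mem_nhdsWithin] with δ (hδ : 0 < δ)
    refine .of_forall fun x => ?_
    rw [norm_pow, sq_le_sq, abs_norm, norm_mul, norm_eq_abs, norm_eq_abs]
    calc |δ| * |deadZone (u x / δ)| ≤ |δ| * |u x / δ| := by
          gcongr ?_ * ?_
          exact abs_deadZone_le _
      _ = |u x| := by rw [← abs_mul, mul_div_cancel₀ _ hδ.ne']
  · refine .of_forall fun x => tendsto_const_nhds.congr' ?_
    by_cases hx : u x = 0
    · simp [hx, deadZone]
    filter_upwards [eventually_lt_abs_div hx 2, self_mem_nhdsWithin] with δ hδ hpos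
    rw [deadZone_of_two_le_abs hδ.le, mul_div_cancel₀ _ (mem_Ioi.1 hpos).ne']

variable {E : Type*} [NormedAddCommGroup E] [NormedSpace ℝ E] {Ω : Set E} {u : E → ℝ} {δ c : ℝ}

lemma contDiff_truncate (hΩ : IsOpen Ω) (hu : ContDiffOn ℝ 1 u Ω) (hδ : 0 < δ)
    (hK : IsClosed {x ∈ Ω | δ ≤ |u x|}) : ContDiff ℝ 1 (truncate Ω u δ) := by
  refine contDiff_iff_contDiffAt.2 fun x => ?_
  by_cases hx : x ∈ Ω
  · exact (contDiffAt_const.mul (contDiff_deadZone.contDiffAt.comp x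
      ((hu.contDiffAt (hΩ.mem_nhds hx)).div_const δ))).congr_of_eventuallyEq
        (truncate_eventuallyEq hΩ u δ hx)
  · have hx' : x ∉ tsupport (truncate Ω u δ) := fun h => hx (tsupport_truncate_subset hδ hK h).1
    exact contDiffAt_const.congr_of_eventuallyEq (notMem_tsupport_iff_eventuallyEq.1 hx')

lemma fderiv_truncate (hΩ : IsOpen Ω) (hu : ContDiffOn ℝ 1 u Ω) (hδ : δ ≠ 0) {x : E}
    (hx : x ∈ Ω) :
    fderiv ℝ (truncate Ω u δ) x = deriv deadZone (u x / δ) • fderiv ℝ u x := by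
  have hux : HasFDerivAt u (fderiv ℝ u x) x :=
    ((hu.contDiffAt (hΩ.mem_nhds hx)).differentiableAt one_ne_zero).hasFDerivAt
  have hG : HasDerivAt (fun s => δ * deadZone (s / δ)) (deriv deadZone (u x / δ)) (u x) := by
    have h := (contDiff_deadZone.differentiable one_ne_zero (u x / δ)).hasDerivAt
    refine ((h.comp (u x) ((hasDerivAt_id _).div_const δ)).const_mul δ).congr_deriv ?_
    rw [mul_one_div, mul_div_cancel₀ _ hδ]
  rw [(truncate_eventuallyEq hΩ u δ hx).fderiv_eq]
  exact (hG.comp_hasFDerivAt x hux).fderiv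

lemma integral_norm_fderiv_truncate_sq [MeasurableSpace E] [OpensMeasurableSpace E] {μ : Measure E}
    (hΩ : IsOpen Ω) (hu : ContDiffOn ℝ 1 u Ω) (hδ : 0 < δ) (hK : IsClosed {x ∈ Ω | δ ≤ |u x|}) :
    ∫ x, ‖fderiv ℝ (truncate Ω u δ) x‖ ^ 2 ∂μ =
      ∫ x in Ω, deriv deadZone (u x / δ) ^ 2 * ‖fderiv ℝ u x‖ ^ 2 ∂μ := by
  rw [← setIntegral_eq_integral_of_forall_compl_eq_zero (s := Ω) fun x hx => ?_]
  · refine setIntegral_congr_fun hΩ.measurableSet fun x hx => ?_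
    simp only [fderiv_truncate hΩ hu hδ.ne' hx, norm_smul, mul_pow, norm_eq_abs, sq_abs]
  · rw [fderiv_of_notMem_tsupport ℝ fun h => hx (tsupport_truncate_subset hδ hK h).1, norm_zero,
      zero_pow two_ne_zero]

lemma tendsto_integral_norm_fderiv_truncate [MeasurableSpace E] [OpensMeasurableSpace E]
    {μ : Measure E} (hΩ : IsOpen Ω) (hu : ContDiffOn ℝ 1 u Ω)
    (hK : ∀ δ > 0, IsClosed {x ∈ Ω | δ ≤ |u x|})
    (hint : IntegrableOn (fun x => ‖fderiv ℝ u x‖ ^ 2) Ω μ) :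
    Tendsto (fun δ => ∫ x, ‖fderiv ℝ (truncate Ω u δ) x‖ ^ 2 ∂μ) (𝓝[>] 0)
      (𝓝 (∫ x in Ω, (Function.support u).indicator (fun x => ‖fderiv ℝ u x‖ ^ 2) x ∂μ)) := by
  obtain ⟨C, hC⟩ := exists_abs_deriv_deadZone_le
  have hG' : Continuous (deriv deadZone) := contDiff_deadZone.continuous_deriv le_rfl
  refine Tendsto.congr' (f₁ := fun δ =>
    ∫ x in Ω, deriv deadZone (u x / δ) ^ 2 * ‖fderiv ℝ u x‖ ^ 2 ∂μ) ?_ ?_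
  · filter_upwards [self_mem_nhdsWithin] with δ (hδ : 0 < δ)
    exact (integral_norm_fderiv_truncate_sq hΩ hu hδ (hK δ hδ)).symm
  refine tendsto_integral_filter_of_dominated_convergence
    (fun x => C ^ 2 * ‖fderiv ℝ u x‖ ^ 2) ?_ ?_ (hint.const_mul _) ?_
  · refine .of_forall fun δ => ContinuousOn.aestronglyMeasurable ?_ hΩ.measurableSet
    exact ((hG'.comp_continuousOn (hu.continuousOn.div_const δ)).pow 2).mul
      ((hu.continuousOn_fderiv_of_isOpen hΩ le_rfl).norm.pow 2)
  · refine .of_forall fun δ => .of_forall fun x => ?_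
    rw [norm_mul, norm_pow, norm_pow, norm_norm, norm_eq_abs]
    gcongr
    exact hC _
  · refine .of_forall fun x => tendsto_const_nhds.congr' ?_
    by_cases hx : u x = 0
    · simp [hx, deriv_deadZone_zero]
    filter_upwards [eventually_lt_abs_div hx 2] with δ hδ
    rw [indicator_of_mem hx, deriv_deadZone_of_two_lt_abs hδ, one_pow, one_mul]

theorem exists_contDiff_compactSupport_lt [MeasurableSpace E] [OpensMeasurableSpace E]
    {μ : Measure E} (hΩ : IsOpen Ω) (hu : ContDiffOn ℝ 1 u Ω)
    (hK : ∀ δ > 0, IsCompact {x ∈ Ω | δ ≤ |u x|})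
    (hint : IntegrableOn (fun x => u x ^ 2) Ω μ)
    (hint' : IntegrableOn (fun x => ‖fderiv ℝ u x‖ ^ 2) Ω μ)
    (hlt : ∫ x in Ω, ‖fderiv ℝ u x‖ ^ 2 ∂μ < c * ∫ x in Ω, u x ^ 2 ∂μ) :
    ∃ v : E → ℝ, ContDiff ℝ 1 v ∧ HasCompactSupport v ∧ tsupport v ⊆ Ω ∧
      ∫ x, ‖fderiv ℝ v x‖ ^ 2 ∂μ < c * ∫ x, v x ^ 2 ∂μ := by
  have hK' (δ : ℝ) (hδ : 0 < δ) : IsClosed {x ∈ Ω | δ ≤ |u x|} := (hK δ hδ).isClosed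
  have hle : ∫ x in Ω, (Function.support u).indicator (fun x => ‖fderiv ℝ u x‖ ^ 2) x ∂μ ≤
      ∫ x in Ω, ‖fderiv ℝ u x‖ ^ 2 ∂μ :=
    integral_mono_of_nonneg (.of_forall fun x => indicator_nonneg (fun y _ => sq_nonneg _) x) hint'
      (.of_forall (indicator_le_self' fun y _ => sq_nonneg _))
  obtain ⟨δ, hδlt, hδ⟩ := (((tendsto_integral_norm_fderiv_truncate hΩ hu hK' hint').eventually_lt
    ((tendsto_integral_truncate_sq hΩ.measurableSet hu.continuousOn hint).const_mul c)
    (hle.trans_lt hlt)).and self_mem_nhdsWithin).exists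
  have hsupp := tsupport_truncate_subset hδ (hK' δ hδ)
  exact ⟨truncate Ω u δ, contDiff_truncate hΩ hu hδ (hK' δ hδ),
    (hK δ hδ).of_isClosed_subset (isClosed_tsupport _) hsupp, fun x hx => (hsupp hx).1, hδlt⟩

end Truncation
/-! ### The distance to the quadrant -/

lemma isOpen_Quad : IsOpen Quad := by
  unfold Quad
  exact (isOpen_lt (by fun_prop) (by fun_prop)).and (isOpen_lt (by fun_prop) (by fun_prop))

lemma closure_Quad : closure Quad = {x | 0 ≤ x 0 ∧ 0 ≤ x 1} := by
  have hclosed : IsClosed {x : ℝ² | 0 ≤ x 0 ∧ 0 ≤ x 1} :=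
    (isClosed_le (by fun_prop) (by fun_prop)).and (isClosed_le (by fun_prop) (by fun_prop))
  refine Subset.antisymm (closure_minimal (fun x hx => ⟨hx.1.le, hx.2.le⟩) hclosed) fun x hx => ?_
  have h : Tendsto (fun t : ℝ => x + t • !₂[1, 1]) (𝓝[>] 0) (𝓝 (x + (0 : ℝ) • !₂[1, 1])) :=
    (Continuous.tendsto (by fun_prop) 0).mono_left nhdsWithin_le_nhds
  rw [zero_smul, add_zero] at h
  refine mem_closure_of_tendsto h ?_
  filter_upwards [self_mem_nhdsWithin] with t (ht : 0 < t)
  simpa [Quad] using And.intro (add_pos_of_nonneg_of_pos hx.1 ht)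
    (add_pos_of_nonneg_of_pos hx.2 ht)

lemma hasDerivAt_posPart_sq (t : ℝ) : HasDerivAt (fun s : ℝ => s⁺ ^ 2) (2 * t⁺) t := by
  rcases lt_trichotomy t 0 with ht | rfl | ht
  · rw [posPart_eq_zero.2 ht.le, mul_zero]
    refine (hasDerivAt_const t (0 : ℝ)).congr_of_eventuallyEq ?_
    filter_upwards [Iio_mem_nhds ht] with s hs
    rw [posPart_eq_zero.2 (le_of_lt hs), zero_pow two_ne_zero]
  · have hO : (fun s : ℝ => s⁺ ^ 2) =O[nhds 0] fun s => s ^ 2 :=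
      Asymptotics.isBigO_of_le _ fun s => by
        rw [norm_pow, norm_pow]
        gcongr
        rw [Real.norm_of_nonneg (posPart_nonneg s)]
        exact sup_le (le_abs_self s) (abs_nonneg s)
    have ho : (fun s : ℝ => s⁺ ^ 2) =o[nhds 0] fun s => s :=
      hO.trans_isLittleO (by simpa using Asymptotics.isLittleO_pow_id one_lt_two)
    simpa [hasDerivAt_iff_isLittleO] using ho
  · rw [posPart_eq_self.2 ht.le]
    refine (by simpa using hasDerivAt_pow 2 t : HasDerivAt (fun s : ℝ => s ^ 2) (2 * t) t)
      |>.congr_of_eventuallyEq ?_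
    filter_upwards [Ioi_mem_nhds ht] with s hs
    rw [posPart_eq_self.2 (le_of_lt hs)]

lemma hasDerivAt_negPart_sq (t : ℝ) : HasDerivAt (fun s : ℝ => s⁻ ^ 2) (-2 * t⁻) t := by
  simpa only [Function.comp_def, posPart_neg, mul_neg, mul_one, neg_mul] using
    (hasDerivAt_posPart_sq (-t)).comp t (hasDerivAt_neg t)

/-- The distance to the closed first quadrant, in terms of the negative parts of the coordinates. -/
def quadDist (x : ℝ²) : ℝ := √((x 0)⁻ ^ 2 + (x 1)⁻ ^ 2)

lemma quadDist_pos_iff {x : ℝ²} : 0 < quadDist x ↔ x 0 < 0 ∨ x 1 < 0 := by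
  rw [quadDist, sqrt_pos]
  have h (t : ℝ) : 0 < t⁻ ^ 2 ↔ t < 0 := by rw [sq_pos_iff, ne_eq, negPart_eq_zero, not_le]
  rw [← h, ← h]
  constructor
  · intro h
    by_contra! hc
    linarith
  · rintro (h | h)
    exacts [add_pos_of_pos_of_nonneg h (sq_nonneg _), add_pos_of_nonneg_of_pos (sq_nonneg _) h]

lemma dist_quadProj (x : ℝ²) : dist x !₂[(x 0)⁺, (x 1)⁺] = quadDist x := by
  have h (t : ℝ) : dist t t⁺ ^ 2 = t⁻ ^ 2 := by
    rw [dist_comm, Real.dist_eq, sq_abs]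
    congr 1
    linarith [posPart_sub_negPart t]
  rw [EuclideanSpace.dist_eq, Fin.sum_univ_two, quadDist, ← h, ← h]
  rfl

lemma mem_GamSharp_of_quadDist {x : ℝ²} (h0 : 0 < quadDist x) (h1 : quadDist x < 1) :
    x ∈ GamSharp := by
  have hneg := quadDist_pos_iff.1 h0
  have hproj : !₂[(x 0)⁺, (x 1)⁺] ∈ frontier Quad := by
    rw [isOpen_Quad.frontier_eq, closure_Quad]
    refine ⟨⟨posPart_nonneg (x 0), posPart_nonneg (x 1)⟩, fun h => ?_⟩
    rcases hneg with hx | hx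
    · exact h.1.ne' (posPart_eq_zero.2 hx.le)
    · exact h.2.ne' (posPart_eq_zero.2 hx.le)
  refine ⟨?_, (Metric.infDist_le_dist_of_mem hproj).trans_lt ((dist_quadProj x).trans_lt h1)⟩
  rw [closure_Quad]
  exact fun h => hneg.elim (not_lt.2 h.1) (not_lt.2 h.2)

lemma continuous_quadDist : Continuous quadDist := by
  have h (i : Fin 2) : Continuous fun x : ℝ² => (x i)⁻ := continuous_negPart.comp (by fun_prop)
  exact (((h 0).pow 2).add ((h 1).pow 2)).sqrt

lemma quadDist_sq (x : ℝ²) {i j : Fin 2} (hij : i ≠ j) :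
    quadDist x ^ 2 = (x i)⁻ ^ 2 + (x j)⁻ ^ 2 := by
  rw [quadDist, sq_sqrt (by positivity)]
  fin_cases i <;> fin_cases j <;> first | contradiction | simp [add_comm]

lemma contDiff_negPart_sq : ContDiff ℝ 1 fun t : ℝ => t⁻ ^ 2 := by
  refine contDiff_one_iff_deriv.2 ⟨fun t => (hasDerivAt_negPart_sq t).differentiableAt, ?_⟩
  rw [funext fun t => (hasDerivAt_negPart_sq t).deriv]
  exact continuous_negPart.const_mul (-2)

lemma contDiffAt_quadDist {x : ℝ²} (hx : 0 < quadDist x) : ContDiffAt ℝ 1 quadDist x := by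
  have h (i : Fin 2) : ContDiff ℝ 1 fun y : ℝ² => (y i)⁻ ^ 2 :=
    contDiff_negPart_sq.comp (EuclideanSpace.proj i : ℝ² →L[ℝ] ℝ).contDiff
  exact ((h 0).add (h 1)).contDiffAt.sqrt (sqrt_pos.1 hx).ne'

lemma hasFDerivAt_quadDist {x : ℝ²} (hx : 0 < quadDist x) :
    HasFDerivAt quadDist
      (∑ i, (-(x i)⁻ / quadDist x) • (EuclideanSpace.proj i : ℝ² →L[ℝ] ℝ)) x := by
  have h (i : Fin 2) : HasFDerivAt (fun y : ℝ² => (y i)⁻ ^ 2)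
      ((-2 * (x i)⁻) • (EuclideanSpace.proj i : ℝ² →L[ℝ] ℝ)) x :=
    HasDerivAt.comp_hasFDerivAt (f := (EuclideanSpace.proj i : ℝ² →L[ℝ] ℝ)) x
      (hasDerivAt_negPart_sq (x i)) (ContinuousLinearMap.hasFDerivAt _)
  refine (((h 0).add (h 1)).sqrt (sqrt_pos.1 hx).ne').congr_fderiv ?_
  change (1 / (2 * quadDist x)) • _ = _
  rw [Fin.sum_univ_two, smul_add, smul_smul, smul_smul]
  congr 2 <;> field_simp

/-! ### Fold coordinates -/

/-- `F(r, t)` does not depend on `t` for `t ≤ 0`. -/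
def ConstOnNonpos {α : Type*} (F : ℝ × ℝ → α) : Prop := ∀ r t, t ≤ 0 → F (r, t) = F (r, 0)

/-- The squared Euclidean length of the gradient of `F`; since `ℝ × ℝ` carries the sup norm, this is
not `‖fderiv ℝ F p‖ ^ 2`. -/
def gradNormSq (F : ℝ × ℝ → ℝ) (p : ℝ × ℝ) : ℝ :=
  fderiv ℝ F p (1, 0) ^ 2 + fderiv ℝ F p (0, 1) ^ 2

section FoldCoordinates

variable {F : ℝ × ℝ → ℝ}

lemma hasDerivAt_partial_fst (hF : Differentiable ℝ F) (r t : ℝ) :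
    HasDerivAt (fun s => F (s, t)) (fderiv ℝ F (r, t) (1, 0)) r :=
  (hF (r, t)).hasFDerivAt.comp_hasDerivAt r ((hasDerivAt_id r).prodMk (hasDerivAt_const r t))

lemma hasDerivAt_partial_snd (hF : Differentiable ℝ F) (r t : ℝ) :
    HasDerivAt (fun s => F (r, s)) (fderiv ℝ F (r, t) (0, 1)) t :=
  (hF (r, t)).hasFDerivAt.comp_hasDerivAt t ((hasDerivAt_const t r).prodMk (hasDerivAt_id t))

lemma continuous_gradNormSq (hF : ContDiff ℝ 1 F) : Continuous (gradNormSq F) := by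
  have h (v : ℝ × ℝ) : Continuous fun p => fderiv ℝ F p v :=
    (hF.continuous_fderiv one_ne_zero).clm_apply continuous_const
  exact ((h (1, 0)).pow 2).add ((h (0, 1)).pow 2)

lemma eq_zero_of_hasDerivAt_of_const_nonpos {f : ℝ → ℝ} {f' t : ℝ} (hf : HasDerivAt f f' t)
    (hconst : ∀ s ≤ 0, f s = f 0) (ht : t ≤ 0) : f' = 0 :=
  (uniqueDiffOn_Iic (0 : ℝ) t ht).eq_deriv _ hf.hasDerivWithinAt
    ((hasDerivWithinAt_const t _ (f 0)).congr hconst (hconst t ht))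

lemma fderiv_snd_of_nonpos (hF : Differentiable ℝ F) (hc : ConstOnNonpos F) {t : ℝ} (ht : t ≤ 0)
    (r : ℝ) : fderiv ℝ F (r, t) (0, 1) = 0 :=
  eq_zero_of_hasDerivAt_of_const_nonpos (hasDerivAt_partial_snd hF r t) (hc r) ht

protected lemma ConstOnNonpos.gradNormSq (hc : ConstOnNonpos F) (hF : Differentiable ℝ F) :
    ConstOnNonpos (gradNormSq F) := by
  intro r t ht
  have h := hasDerivAt_partial_fst hF r t
  simp only [hc _ t ht] at h
  rw [gradNormSq, gradNormSq, fderiv_snd_of_nonpos hF hc ht,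
    fderiv_snd_of_nonpos hF hc le_rfl, h.unique (hasDerivAt_partial_fst hF r 0)]

/-- Fold coordinates `(d, m)` on the guide: the distance to the quadrant, and the larger coordinate.
On the two legs `m` is the position along the leg; on the corner disc `m ≤ 0`. -/
def foldCoord (x : ℝ²) : ℝ × ℝ := (quadDist x, max (x 0) (x 1))

lemma continuous_foldCoord : Continuous foldCoord :=
  continuous_quadDist.prodMk (by fun_prop)

lemma ConstOnNonpos.apply_foldCoord {α : Type*} {G : ℝ × ℝ → α} (hG : ConstOnNonpos G) {x : ℝ²}
    {i j : Fin 2} (hij : i ≠ j) (hi : x i < 0) : G (foldCoord x) = G (quadDist x, x j) := by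
  have hmax : max (x 0) (x 1) = max (x i) (x j) := by
    fin_cases i <;> fin_cases j <;> first | contradiction | simp [max_comm]
  rw [foldCoord, hmax]
  rcases le_total (x i) (x j) with h | h
  · rw [max_eq_right h]
  · rw [max_eq_left h, hG _ _ hi.le, hG _ _ (h.trans hi.le)]

lemma comp_foldCoord_eventuallyEq (hc : ConstOnNonpos F) {x : ℝ²} {i j : Fin 2}
    (hij : i ≠ j) (hi : x i < 0) : F ∘ foldCoord =ᶠ[𝓝 x] fun y => F (quadDist y, y j) := by
  have hcont : ContinuousAt (fun y : ℝ² => y i) x := by fun_prop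
  filter_upwards [hcont.eventually_lt_const hi] with y hy using hc.apply_foldCoord hij hy

lemma exists_ne_coord_neg {x : ℝ²} (hx : 0 < quadDist x) : ∃ i j : Fin 2, i ≠ j ∧ x i < 0 :=
  (quadDist_pos_iff.1 hx).elim (fun h => ⟨0, 1, by decide, h⟩) fun h => ⟨1, 0, by decide, h⟩

lemma contDiffOn_comp_foldCoord (hF : ContDiff ℝ 1 F) (hc : ConstOnNonpos F) :
    ContDiffOn ℝ 1 (F ∘ foldCoord) {x | 0 < quadDist x} := by
  intro x (hx : 0 < quadDist x)
  obtain ⟨i, j, hij, hi⟩ := exists_ne_coord_neg hx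
  have hj : ContDiffAt ℝ 1 (fun y : ℝ² => y j) x :=
    (EuclideanSpace.proj j : ℝ² →L[ℝ] ℝ).contDiff.contDiffAt
  exact ((hF.contDiffAt.comp x ((contDiffAt_quadDist hx).prodMk hj)).congr_of_eventuallyEq
    (comp_foldCoord_eventuallyEq hc hij hi)).contDiffWithinAt

lemma fderiv_comp_foldCoord_apply (hF : Differentiable ℝ F) (hc : ConstOnNonpos F) {x : ℝ²}
    (hx : 0 < quadDist x) {i j : Fin 2} (hij : i ≠ j) (hi : x i < 0) (v : ℝ²) :
    fderiv ℝ (F ∘ foldCoord) x v =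
      (∑ k, -(x k)⁻ / quadDist x * v k) * fderiv ℝ F (quadDist x, x j) (1, 0) +
        v j * fderiv ℝ F (quadDist x, x j) (0, 1) := by
  have hcomp := (hF (quadDist x, x j)).hasFDerivAt.comp x
    ((hasFDerivAt_quadDist hx).prodMk (EuclideanSpace.proj j : ℝ² →L[ℝ] ℝ).hasFDerivAt)
  have hsplit (φ : ℝ × ℝ →L[ℝ] ℝ) (a b : ℝ) : φ (a, b) = a * φ (1, 0) + b * φ (0, 1) := by
    rw [← smul_eq_mul, ← smul_eq_mul, ← map_smul, ← map_smul, ← map_add]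
    simp
  rw [(hcomp.congr_of_eventuallyEq (comp_foldCoord_eventuallyEq hc hij hi)).fderiv,
    ContinuousLinearMap.comp_apply, ContinuousLinearMap.prod_apply, hsplit]
  simp

lemma norm_sq_fderiv_comp_foldCoord (hF : Differentiable ℝ F) (hc : ConstOnNonpos F) {x : ℝ²}
    (hx : 0 < quadDist x) :
    ‖fderiv ℝ (F ∘ foldCoord) x‖ ^ 2 = gradNormSq F (foldCoord x) := by
  obtain ⟨i, j, hij, hi⟩ := exists_ne_coord_neg hx
  -- Where `∂F/∂t ≠ 0` the distance depends on the other coordinate only.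
  have horth : (x j)⁻ * fderiv ℝ F (quadDist x, x j) (0, 1) = 0 := by
    rcases le_total (x j) 0 with hj | hj
    · rw [fderiv_snd_of_nonpos hF hc hj, mul_zero]
    · rw [negPart_eq_zero.2 hj, zero_mul]
  have hsq := quadDist_sq x hij
  have hsum (f : Fin 2 → ℝ) : ∑ k, f k = f i + f j := by
    fin_cases i <;> fin_cases j <;> first | contradiction | simp [Fin.sum_univ_two, add_comm]
  rw [(EuclideanSpace.basisFun (Fin 2) ℝ).norm_dual, (hc.gradNormSq hF).apply_foldCoord hij hi,
    hsum]
  simp only [EuclideanSpace.basisFun_apply, fderiv_comp_foldCoord_apply hF hc hx hij hi, hsum,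
    PiLp.single_apply, hij, hij.symm, if_true, if_false]
  rw [gradNormSq]
  set a := fderiv ℝ F (quadDist x, x j) (1, 0)
  set b := fderiv ℝ F (quadDist x, x j) (0, 1)
  field_simp
  linear_combination -a ^ 2 * hsq - 2 * a * quadDist x * horth

end FoldCoordinates

/-! ### Integration in fold coordinates -/

lemma sin_neg_and_cos_neg_iff {θ : ℝ} (hθ : θ ∈ Ioo (-π) π) :
    cos θ < 0 ∧ sin θ < 0 ↔ θ < -(π / 2) := by
  have hπ := pi_pos
  constructor
  · rintro ⟨hc, hs⟩
    have h0 : θ < 0 := not_le.1 fun h => hs.not_ge (sin_nonneg_of_nonneg_of_le_pi h hθ.2.le)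
    exact not_le.1 fun h => hc.not_ge (cos_nonneg_of_neg_pi_div_two_le_of_le h (by linarith))
  · intro h
    refine ⟨?_, sin_neg_of_neg_of_neg_pi_lt (by linarith) hθ.1⟩
    rw [← cos_neg]
    exact cos_neg_of_pi_div_two_lt_of_lt (by linarith) (by linarith [hθ.1])

/-- The open unit quarter disc in the third quadrant: the rounded corner of the guide. -/
def quarterDisc : Set (ℝ × ℝ) := {p | p.1 < 0 ∧ p.2 < 0 ∧ p.1 ^ 2 + p.2 ^ 2 < 1}

lemma isOpen_quarterDisc : IsOpen quarterDisc := by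
  unfold quarterDisc
  exact (isOpen_lt (by fun_prop) (by fun_prop)).and
    ((isOpen_lt (by fun_prop) (by fun_prop)).and (isOpen_lt (by fun_prop) (by fun_prop)))

lemma isBounded_quarterDisc : Bornology.IsBounded quarterDisc := by
  refine ((Metric.isBounded_Icc (-1) 0).prod (Metric.isBounded_Icc (-1) 0)).subset fun p hp => ?_
  obtain ⟨h₁, h₂, hlt⟩ := hp
  exact ⟨⟨by nlinarith, h₁.le⟩, by nlinarith, h₂.le⟩

lemma polarCoord_symm_sq_add_sq (p : ℝ × ℝ) :
    (polarCoord.symm p).1 ^ 2 + (polarCoord.symm p).2 ^ 2 = p.1 ^ 2 := by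
  rw [polarCoord_symm_apply]
  linear_combination p.1 ^ 2 * sin_sq_add_cos_sq p.2

lemma polarCoord_symm_mem_quarterDisc_iff {p : ℝ × ℝ} (hp : p ∈ polarCoord.target) :
    polarCoord.symm p ∈ quarterDisc ↔ p ∈ Ioo 0 1 ×ˢ Ioo (-π) (-(π / 2)) := by
  have hr : 0 < p.1 := hp.1
  have hθ : p.2 ∈ Ioo (-π) π := hp.2
  have hsign : (polarCoord.symm p).1 < 0 ∧ (polarCoord.symm p).2 < 0 ↔ p.2 < -(π / 2) := by
    rw [← sin_neg_and_cos_neg_iff hθ, polarCoord_symm_apply, ← smul_eq_mul,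
      smul_neg_iff_of_pos_left hr, ← smul_eq_mul, smul_neg_iff_of_pos_left hr]
  rw [quarterDisc, mem_ofPred_eq, ← and_assoc, hsign, polarCoord_symm_sq_add_sq,
    sq_lt_one_iff₀ hr.le, mem_prod, mem_Ioo, mem_Ioo]
  exact ⟨fun h => ⟨⟨hr, h.2⟩, hθ.1, h.1⟩, fun h => ⟨h.2.2, h.1.2⟩⟩

lemma setIntegral_quarterDisc (φ : ℝ → ℝ) :
    ∫ p in quarterDisc, φ √(p.1 ^ 2 + p.2 ^ 2) = π / 2 * ∫ r in (0 : ℝ)..1, r * φ r := by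
  set S : Set (ℝ × ℝ) := Ioo 0 1 ×ˢ Ioo (-π) (-(π / 2))
  have hS : S ⊆ polarCoord.target :=
    prod_mono (fun r hr => hr.1) (Ioo_subset_Ioo_right (by linarith [pi_pos]))
  have hpolar (p : ℝ × ℝ) (hp : p ∈ polarCoord.target) :
      p.1 • quarterDisc.indicator (fun p => φ √(p.1 ^ 2 + p.2 ^ 2)) (polarCoord.symm p) =
        S.indicator (fun p => (p.1 * φ p.1) * 1) p := by
    by_cases h : p ∈ S
    · rw [indicator_of_mem ((polarCoord_symm_mem_quarterDisc_iff hp).2 h), indicator_of_mem h,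
        polarCoord_symm_sq_add_sq, sqrt_sq (le_of_lt hp.1), smul_eq_mul, mul_one]
    · rw [indicator_of_notMem (mt (polarCoord_symm_mem_quarterDisc_iff hp).1 h),
        indicator_of_notMem h, smul_zero]
  rw [← integral_indicator isOpen_quarterDisc.measurableSet, ← integral_comp_polarCoord_symm,
    setIntegral_congr_fun polarCoord.open_target.measurableSet hpolar,
    setIntegral_indicator (measurableSet_Ioo.prod measurableSet_Ioo),
    inter_eq_right.2 hS, Measure.volume_eq_prod, setIntegral_prod_mul (fun r => r * φ r) fun _ => 1,
    ← integral_Ioc_eq_integral_Ioo, ← intervalIntegral.integral_of_le zero_le_one, mul_comm]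
  congr 1
  rw [setIntegral_const, volume_real_Ioo_of_le (by linarith [pi_pos]), smul_eq_mul]
  ring

lemma setIntegral_Ioo_prod_Ioo_neg {G : ℝ × ℝ → ℝ} (hG : Continuous G) {R : ℝ} (hR : 0 ≤ R) :
    ∫ p in Ioo 0 R ×ˢ Ioo (-1) 0, G (-p.2, p.1) = ∫ t in 0..R, ∫ r in 0..1, G (r, t) := by
  have hint : IntegrableOn (fun p : ℝ × ℝ => G (-p.2, p.1)) (Ioo 0 R ×ˢ Ioo (-1) 0)
      (volume.prod volume) :=
    (Continuous.continuousOn (by fun_prop)).integrableOn_compact (isCompact_Icc.prod isCompact_Icc)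
      |>.mono_set (prod_mono Ioo_subset_Icc_self Ioo_subset_Icc_self)
  rw [Measure.volume_eq_prod, setIntegral_prod _ hint, ← integral_Ioc_eq_integral_Ioo,
    ← intervalIntegral.integral_of_le hR]
  refine intervalIntegral.integral_congr fun t _ => ?_
  rw [← integral_Ioc_eq_integral_Ioo, ← intervalIntegral.integral_of_le (by norm_num)]
  simpa using intervalIntegral.integral_comp_neg (fun r => G (r, t)) (a := -1) (b := 0)

lemma measurePreserving_toLp :
    MeasurePreserving (fun p : ℝ × ℝ => (!₂[p.1, p.2] : ℝ²)) volume volume :=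
  (PiLp.volume_preserving_toLp (Fin 2)).comp (volume_preserving_finTwoArrow ℝ).symm

lemma measurableEmbedding_toLp : MeasurableEmbedding fun p : ℝ × ℝ => (!₂[p.1, p.2] : ℝ²) :=
  (MeasurableEquiv.toLp 2 (Fin 2 → ℝ)).measurableEmbedding.comp
    (MeasurableEquiv.finTwoArrow (α := ℝ)).symm.measurableEmbedding

/-- The part of the guide where both legs are cut at length `R`. -/
def guideCorner (R : ℝ) : Set ℝ² := foldCoord ⁻¹' (Ioo 0 1 ×ˢ Iio R)

lemma isOpen_guideCorner (R : ℝ) : IsOpen (guideCorner R) :=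
  (isOpen_Ioo.prod isOpen_Iio).preimage continuous_foldCoord

lemma negPart_le_quadDist (x : ℝ²) (i : Fin 2) : (x i)⁻ ≤ quadDist x := by
  refine le_sqrt_of_sq_le ?_
  fin_cases i
  exacts [le_add_of_nonneg_right (sq_nonneg _), le_add_of_nonneg_left (sq_nonneg _)]

lemma isCompact_preimage_foldCoord (R : ℝ) : IsCompact (foldCoord ⁻¹' (Icc 0 1 ×ˢ Iic R)) := by
  have hbox : IsCompact ((fun p : ℝ × ℝ => (!₂[p.1, p.2] : ℝ²)) '' (Icc (-1) R ×ˢ Icc (-1) R)) :=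
    (isCompact_Icc.prod isCompact_Icc).image (by fun_prop)
  refine hbox.of_isClosed_subset
    ((isClosed_Icc.prod isClosed_Iic).preimage continuous_foldCoord) fun x hx => ?_
  have hlower (i : Fin 2) : -1 ≤ x i := by
    have hle : quadDist x ≤ 1 := hx.1.2
    linarith [neg_le_negPart (x i), negPart_le_quadDist x i]
  have hupper : x 0 ≤ R ∧ x 1 ≤ R := max_le_iff.1 hx.2
  refine ⟨(x 0, x 1), ⟨⟨hlower 0, hupper.1⟩, hlower 1, hupper.2⟩, ?_⟩
  ext i
  fin_cases i <;> rfl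

lemma guideCorner_subset (R : ℝ) : guideCorner R ⊆ foldCoord ⁻¹' (Icc 0 1 ×ˢ Iic R) :=
  preimage_mono (prod_mono Ioo_subset_Icc_self Iio_subset_Iic_self)

lemma integrableOn_guideCorner {f : ℝ² → ℝ} (hf : Continuous f) (R : ℝ) :
    IntegrableOn f (guideCorner R) :=
  (hf.continuousOn.integrableOn_compact (isCompact_preimage_foldCoord R)).mono_set
    (guideCorner_subset R)

lemma foldCoord_swap (x y : ℝ) : foldCoord !₂[y, x] = foldCoord !₂[x, y] := by
  simp [foldCoord, quadDist, add_comm, max_comm]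

lemma foldCoord_of_nonneg_of_nonpos {x y : ℝ} (hx : 0 ≤ x) (hy : y ≤ 0) :
    foldCoord !₂[x, y] = (-y, x) := by
  simp [foldCoord, quadDist, negPart_eq_zero.2 hx, hy, hy.trans hx, sqrt_sq_eq_abs,
    abs_of_nonpos hy]

lemma foldCoord_of_nonpos {x y : ℝ} (hx : x ≤ 0) (hy : y ≤ 0) :
    foldCoord !₂[x, y] = (√(x ^ 2 + y ^ 2), max x y) := by
  simp [foldCoord, quadDist, negPart_eq_neg.2 hx, negPart_eq_neg.2 hy]

lemma foldCoord_of_nonneg {x y : ℝ} (hx : 0 ≤ x) (hy : 0 ≤ y) :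
    foldCoord !₂[x, y] = (0, max x y) := by
  simp [foldCoord, quadDist, negPart_eq_zero.2 hx, negPart_eq_zero.2 hy]

lemma mem_guideCorner_iff {R : ℝ} (hR : 0 ≤ R) {p : ℝ × ℝ} (h₁ : p.1 ≠ 0) (h₂ : p.2 ≠ 0) :
    !₂[p.1, p.2] ∈ guideCorner R ↔
      p ∈ Ioo 0 R ×ˢ Ioo (-1) 0 ∪ Ioo (-1) 0 ×ˢ Ioo 0 R ∪ quarterDisc := by
  obtain ⟨x, y⟩ := p
  rw [guideCorner, mem_preimage]
  rcases lt_or_gt_of_ne h₁ with hx | hx <;> rcases lt_or_gt_of_ne h₂ with hy | hy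
  · rw [foldCoord_of_nonpos hx.le hy.le]
    have hpos : 0 < √(x ^ 2 + y ^ 2) := sqrt_pos.2 (add_pos (sq_pos_of_neg hx) (sq_pos_of_neg hy))
    have hlt : √(x ^ 2 + y ^ 2) < 1 ↔ x ^ 2 + y ^ 2 < 1 := by rw [sqrt_lt' one_pos, one_pow]
    simp only [quarterDisc, mem_union, mem_prod, mem_Ioo, mem_Iio, mem_ofPred_eq, hlt]
    grind
  · rw [foldCoord_swap, foldCoord_of_nonneg_of_nonpos hy.le hx.le]
    simp only [quarterDisc, mem_union, mem_prod, mem_Ioo, mem_Iio, mem_ofPred_eq]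
    grind
  · rw [foldCoord_of_nonneg_of_nonpos hx.le hy.le]
    simp only [quarterDisc, mem_union, mem_prod, mem_Ioo, mem_Iio, mem_ofPred_eq]
    grind
  · rw [foldCoord_of_nonneg hx.le hy.le]
    simp only [quarterDisc, mem_union, mem_prod, mem_Ioo, mem_Iio, mem_ofPred_eq]
    grind

lemma integrableOn_of_continuous_of_isBounded {X E : Type*} [MetricSpace X] [ProperSpace X]
    [MeasurableSpace X] [OpensMeasurableSpace X] {μ : Measure X} [IsFiniteMeasureOnCompacts μ]
    [NormedAddCommGroup E] {f : X → E} (hf : Continuous f) {S : Set X}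
    (hS : Bornology.IsBounded S) : IntegrableOn f S μ :=
  (hf.continuousOn.integrableOn_compact hS.isCompact_closure).mono_set subset_closure

lemma foldCoord_toLp_preimage_ae_eq {R : ℝ} (hR : 0 ≤ R) :
    (fun p : ℝ × ℝ => (!₂[p.1, p.2] : ℝ²)) ⁻¹' guideCorner R =ᵐ[volume]
      (Ioo 0 R ×ˢ Ioo (-1) 0 ∪ Ioo (-1) 0 ×ˢ Ioo 0 R ∪ quarterDisc : Set (ℝ × ℝ)) := by
  have h₁ : ∀ᵐ p : ℝ × ℝ, p.1 ≠ 0 := Measure.quasiMeasurePreserving_fst.ae (Measure.ae_ne volume 0)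
  have h₂ : ∀ᵐ p : ℝ × ℝ, p.2 ≠ 0 := Measure.quasiMeasurePreserving_snd.ae (Measure.ae_ne volume 0)
  filter_upwards [h₁, h₂] with p hp₁ hp₂ using propext (mem_guideCorner_iff hR hp₁ hp₂)

section FoldedIntegrals

variable {G : ℝ × ℝ → ℝ}

lemma setIntegral_foldCoord_stripBelow (hG : Continuous G) {R : ℝ} (hR : 0 ≤ R) :
    ∫ p in Ioo 0 R ×ˢ Ioo (-1) 0, G (foldCoord !₂[p.1, p.2]) =
      ∫ t in 0..R, ∫ r in 0..1, G (r, t) := by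
  rw [← setIntegral_Ioo_prod_Ioo_neg hG hR]
  refine setIntegral_congr_fun (measurableSet_Ioo.prod measurableSet_Ioo) fun p hp => ?_
  exact congrArg G (foldCoord_of_nonneg_of_nonpos hp.1.1.le hp.2.2.le)

lemma setIntegral_foldCoord_stripLeft (hG : Continuous G) {R : ℝ} (hR : 0 ≤ R) :
    ∫ p in Ioo (-1) 0 ×ˢ Ioo 0 R, G (foldCoord !₂[p.1, p.2]) =
      ∫ t in 0..R, ∫ r in 0..1, G (r, t) := by
  rw [← setIntegral_foldCoord_stripBelow hG hR, Measure.volume_eq_prod, ← setIntegral_prod_swap]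
  simp only [Prod.fst_swap, Prod.snd_swap, foldCoord_swap]

lemma setIntegral_foldCoord_quarterDisc (hc : ConstOnNonpos G) :
    ∫ p in quarterDisc, G (foldCoord !₂[p.1, p.2]) =
      π / 2 * ∫ r in (0 : ℝ)..1, r * G (r, 0) := by
  rw [← setIntegral_quarterDisc fun r => G (r, 0)]
  refine setIntegral_congr_fun isOpen_quarterDisc.measurableSet fun p ⟨h₁, h₂, _⟩ => ?_
  exact (congrArg G (foldCoord_of_nonpos h₁.le h₂.le)).trans (hc _ _ (max_le h₁.le h₂.le))

lemma setIntegral_guideCorner (hG : Continuous G) (hc : ConstOnNonpos G) {R : ℝ} (hR : 0 ≤ R) :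
    ∫ x in guideCorner R, G (foldCoord x) =
      π / 2 * (∫ r in (0 : ℝ)..1, r * G (r, 0)) + 2 * ∫ t in 0..R, ∫ r in 0..1, G (r, t) := by
  have hint {S : Set (ℝ × ℝ)} (hS : Bornology.IsBounded S) :
      IntegrableOn (fun p : ℝ × ℝ => G (foldCoord !₂[p.1, p.2])) S :=
    integrableOn_of_continuous_of_isBounded (hG.comp (continuous_foldCoord.comp (by fun_prop))) hS
  have hbdd (a b c d : ℝ) : Bornology.IsBounded (Ioo a b ×ˢ Ioo c d) :=
    (Metric.isBounded_Ioo a b).prod (Metric.isBounded_Ioo c d)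
  have hstrips : Disjoint (Ioo 0 R ×ˢ Ioo (-1) 0) (Ioo (-1) 0 ×ˢ Ioo 0 R) :=
    disjoint_left.2 fun p hp hp' => hp.1.1.not_gt hp'.1.2
  have hdisc : Disjoint (Ioo 0 R ×ˢ Ioo (-1) 0 ∪ Ioo (-1) 0 ×ˢ Ioo 0 R) quarterDisc :=
    disjoint_left.2 fun p hp hp' =>
      hp.elim (fun h => h.1.1.not_gt hp'.1) fun h => h.2.1.not_gt hp'.2.1
  rw [← measurePreserving_toLp.setIntegral_preimage_emb measurableEmbedding_toLp,
    setIntegral_congr_set (foldCoord_toLp_preimage_ae_eq hR),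
    setIntegral_union hdisc isOpen_quarterDisc.measurableSet
      ((hint (hbdd ..)).union (hint (hbdd ..))) (hint isBounded_quarterDisc),
    setIntegral_union hstrips (measurableSet_Ioo.prod measurableSet_Ioo)
      (hint (hbdd ..)) (hint (hbdd ..)),
    setIntegral_foldCoord_stripBelow hG hR, setIntegral_foldCoord_stripLeft hG hR,
    setIntegral_foldCoord_quarterDisc hc]
  ring

end FoldedIntegrals

/-! ### The transverse modes -/

section Modes

lemma hasDerivAt_sin_mul (k r : ℝ) : HasDerivAt (fun r => sin (k * r)) (k * cos (k * r)) r := by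
  simpa [mul_comm] using ((hasDerivAt_id r).const_mul k).sin

lemma hasDerivAt_cos_mul (k r : ℝ) : HasDerivAt (fun r => cos (k * r)) (-k * sin (k * r)) r := by
  simpa [mul_comm] using ((hasDerivAt_id r).const_mul k).cos

lemma sin_two_pi_mul (r : ℝ) : sin (2 * π * r) = 2 * sin (π * r) * cos (π * r) := by
  rw [mul_assoc, sin_two_mul]

lemma cos_two_pi_mul (r : ℝ) : cos (2 * π * r) = 1 - 2 * sin (π * r) ^ 2 := by
  rw [mul_assoc, cos_two_mul, cos_sq']
  ring

lemma integral_sin_modes_sq (a b : ℝ) :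
    ∫ r in (0 : ℝ)..1, (a * sin (π * r) + b * sin (2 * π * r)) ^ 2 = (a ^ 2 + b ^ 2) / 2 := by
  have hderiv (r : ℝ) : HasDerivAt (fun r => (a ^ 2 + b ^ 2) / 2 * r
      - a ^ 2 / (2 * π) * (sin (π * r) * cos (π * r)) + 4 * a * b / (3 * π) * sin (π * r) ^ 3
      - b ^ 2 / (4 * π) * (sin (2 * π * r) * cos (2 * π * r)))
      ((a * sin (π * r) + b * sin (2 * π * r)) ^ 2) r := by
    have hs := hasDerivAt_sin_mul π r
    have hc := hasDerivAt_cos_mul π r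
    refine (((((hasDerivAt_id r).const_mul _).sub ((hs.mul hc).const_mul _)).add
      ((hs.pow 3).const_mul _)).sub (((hasDerivAt_sin_mul (2 * π) r).mul
        (hasDerivAt_cos_mul (2 * π) r)).const_mul _)).congr_deriv ?_
    have h₁ := sin_sq_add_cos_sq (π * r)
    have h₂ := sin_sq_add_cos_sq (2 * π * r)
    have h₃ := sin_two_pi_mul r
    push_cast
    field_simp
    linear_combination -4 * a ^ 2 * h₁ - 4 * b ^ 2 * h₂ - 16 * a * b * sin (π * r) * h₃
  rw [intervalIntegral.integral_eq_sub_of_hasDerivAt (fun r _ => hderiv r)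
    (Continuous.intervalIntegrable (by fun_prop) _ _)]
  simp

lemma integral_cos_modes_sq (a b : ℝ) :
    ∫ r in (0 : ℝ)..1, (a * cos (π * r) + b * cos (2 * π * r)) ^ 2 = (a ^ 2 + b ^ 2) / 2 := by
  have hderiv (r : ℝ) : HasDerivAt (fun r => (a ^ 2 + b ^ 2) / 2 * r
      + a ^ 2 / (2 * π) * (sin (π * r) * cos (π * r))
      + 2 * a * b / π * (sin (π * r) - 2 / 3 * sin (π * r) ^ 3)
      + b ^ 2 / (4 * π) * (sin (2 * π * r) * cos (2 * π * r)))
      ((a * cos (π * r) + b * cos (2 * π * r)) ^ 2) r := by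
    have hs := hasDerivAt_sin_mul π r
    have hc := hasDerivAt_cos_mul π r
    refine (((((hasDerivAt_id r).const_mul _).add ((hs.mul hc).const_mul _)).add
      ((hs.sub ((hs.pow 3).const_mul _)).const_mul _)).add (((hasDerivAt_sin_mul (2 * π) r).mul
        (hasDerivAt_cos_mul (2 * π) r)).const_mul _)).congr_deriv ?_
    have h₁ := sin_sq_add_cos_sq (π * r)
    have h₂ := sin_sq_add_cos_sq (2 * π * r)
    have h₃ := cos_two_pi_mul r
    push_cast
    field_simp
    linear_combination -4 * a ^ 2 * h₁ - 4 * b ^ 2 * h₂ - 16 * a * b * cos (π * r) * h₃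
  rw [intervalIntegral.integral_eq_sub_of_hasDerivAt (fun r _ => hderiv r)
    (Continuous.intervalIntegrable (by fun_prop) _ _)]
  simp

lemma integral_mul_modes_energy (a b : ℝ) :
    ∫ r in (0 : ℝ)..1, r * ((a * (π * cos (π * r)) + b * (2 * π * cos (2 * π * r))) ^ 2 -
      π ^ 2 * (a * sin (π * r) + b * sin (2 * π * r)) ^ 2) =
      -(8 / 3) * a * b + 3 * π ^ 2 / 4 * b ^ 2 := by
  have hderiv (r : ℝ) : HasDerivAt (fun r =>
      a ^ 2 * (π * (r * (sin (π * r) * cos (π * r))) + 1 / 2 * cos (π * r) ^ 2)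
      + 2 * a * b * (π * (r * (cos (π * r) * sin (2 * π * r))) + 2 / 3 * cos (π * r) ^ 3)
      + b ^ 2 * (3 * π ^ 2 / 4 * r ^ 2 + (5 * π / 4 * (r * (sin (2 * π * r) * cos (2 * π * r)))
        + 5 / 16 * cos (2 * π * r) ^ 2)))
      (r * ((a * (π * cos (π * r)) + b * (2 * π * cos (2 * π * r))) ^ 2 -
        π ^ 2 * (a * sin (π * r) + b * sin (2 * π * r)) ^ 2)) r := by
    have hr := hasDerivAt_id r
    have hs := hasDerivAt_sin_mul π r
    have hc := hasDerivAt_cos_mul π r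
    have hS := hasDerivAt_sin_mul (2 * π) r
    have hC := hasDerivAt_cos_mul (2 * π) r
    refine ((((((hr.mul (hs.mul hc)).const_mul π).add ((hc.pow 2).const_mul _)).const_mul _).add
      ((((hr.mul (hc.mul hS)).const_mul π).add ((hc.pow 3).const_mul _)).const_mul _)).add
      ((((hr.pow 2).const_mul _).add (((hr.mul (hS.mul hC)).const_mul _).add
        ((hC.pow 2).const_mul _))).const_mul _)).congr_deriv ?_
    have h₁ := sin_sq_add_cos_sq (2 * π * r)
    have h₂ := sin_two_pi_mul r
    push_cast
    simp only [id, Pi.mul_apply]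
    linear_combination (2 * a * b * π * cos (π * r)) * h₂ - 3 / 2 * b ^ 2 * r * π ^ 2 * h₁
  rw [intervalIntegral.integral_eq_sub_of_hasDerivAt (fun r _ => hderiv r)
    (Continuous.intervalIntegrable (by fun_prop) _ _)]
  simp only [mul_one, sin_pi, cos_pi, mul_neg, neg_zero, mul_zero, one_div, even_two,
    Even.neg_pow, one_pow, zero_add, sin_two_pi, cos_two_pi, sin_zero, cos_zero, ne_eq,
    OfNat.ofNat_ne_zero, not_false_eq_true, zero_pow, neg_mul]
  ring

end Modes

section Energy

variable {F : ℝ × ℝ → ℝ} {R c : ℝ}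

lemma isCompact_superlevel_comp_foldCoord (hF : Continuous F) (hzero : ∀ t, F (0, t) = 0)
    (hone : ∀ t, F (1, t) = 0) (hR : ∀ r, F (r, R) = 0) {δ : ℝ} (hδ : 0 < δ) :
    IsCompact {x ∈ guideCorner R | δ ≤ |(F ∘ foldCoord) x|} := by
  have hclosed : IsClosed {x | δ ≤ |(F ∘ foldCoord) x|} :=
    isClosed_le continuous_const (hF.comp continuous_foldCoord).abs
  convert (isCompact_preimage_foldCoord R).inter_right hclosed using 1
  ext x
  refine and_congr_left fun hx => ⟨fun h => guideCorner_subset R h, fun ⟨⟨h0, h1⟩, h2⟩ => ?_⟩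
  have hne : F (foldCoord x) ≠ 0 := abs_pos.1 (hδ.trans_le hx)
  rw [guideCorner, mem_preimage]
  generalize foldCoord x = p at *
  obtain ⟨r, t⟩ := p
  have hr0 : r ≠ 0 := fun h => hne (h ▸ hzero t)
  have hr1 : r ≠ 1 := fun h => hne (h ▸ hone t)
  have htR : t ≠ R := fun h => hne (h ▸ hR r)
  exact ⟨⟨lt_of_le_of_ne h0 hr0.symm, lt_of_le_of_ne h1 hr1⟩, lt_of_le_of_ne h2 htR⟩

lemma norm_sq_fderiv_eqOn_guideCorner (hF : Differentiable ℝ F) (hc : ConstOnNonpos F) :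
    EqOn (fun x => ‖fderiv ℝ (F ∘ foldCoord) x‖ ^ 2) (gradNormSq F ∘ foldCoord) (guideCorner R) :=
  fun _ hx => norm_sq_fderiv_comp_foldCoord hF hc hx.1.1

lemma exists_compactSupport_lt_of_energy_neg (hF : ContDiff ℝ 1 F) (hc : ConstOnNonpos F)
    (hzero : ∀ t, F (0, t) = 0) (hone : ∀ t, F (1, t) = 0) (hR : ∀ r, F (r, R) = 0)
    (hneg : ∫ x in guideCorner R, (gradNormSq F (foldCoord x) - c * F (foldCoord x) ^ 2) < 0) :
    ∃ v : ℝ² → ℝ, ContDiff ℝ 1 v ∧ HasCompactSupport v ∧ tsupport v ⊆ guideCorner R ∧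
      ∫ x, ‖fderiv ℝ v x‖ ^ 2 < c * ∫ x, v x ^ 2 := by
  have hΩ := isOpen_guideCorner R
  have hgrad := norm_sq_fderiv_eqOn_guideCorner (R := R) (hF.differentiable one_ne_zero) hc
  have hint : IntegrableOn (fun x => (F ∘ foldCoord) x ^ 2) (guideCorner R) :=
    integrableOn_guideCorner ((hF.continuous.comp continuous_foldCoord).pow 2) R
  have hint' := integrableOn_guideCorner ((continuous_gradNormSq hF).comp continuous_foldCoord) R
  refine exists_contDiff_compactSupport_lt hΩ
    ((contDiffOn_comp_foldCoord hF hc).mono fun x hx => hx.1.1)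
    (fun δ hδ => isCompact_superlevel_comp_foldCoord hF.continuous hzero hone hR hδ)
    hint (hint'.congr_fun hgrad.symm hΩ.measurableSet) ?_
  rw [setIntegral_congr_fun hΩ.measurableSet hgrad, ← integral_const_mul, ← sub_neg,
    ← integral_sub hint' (hint.const_mul c)]
  exact hneg

end Energy

section TwoModes

variable {a b : ℝ → ℝ}

/-- The function on the `(r, t)`-strip with transverse Dirichlet modes `sin (π r)` and `sin (2π r)`
and axial amplitudes `a`, `b`. -/
def twoModes (a b : ℝ → ℝ) (p : ℝ × ℝ) : ℝ := a p.2 * sin (π * p.1) + b p.2 * sin (2 * π * p.1)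

lemma contDiff_twoModes (ha : ContDiff ℝ 1 a) (hb : ContDiff ℝ 1 b) :
    ContDiff ℝ 1 (twoModes a b) := by
  have hsin (k : ℝ) : ContDiff ℝ 1 fun p : ℝ × ℝ => sin (k * p.1) :=
    contDiff_sin.comp (contDiff_const.mul contDiff_fst)
  exact ((ha.comp contDiff_snd).mul (hsin π)).add ((hb.comp contDiff_snd).mul (hsin (2 * π)))

lemma constOnNonpos_twoModes (ha : ∀ t ≤ 0, a t = a 0) (hb : ∀ t ≤ 0, b t = b 0) :
    ConstOnNonpos (twoModes a b) := fun r t ht => by simp only [twoModes, ha t ht, hb t ht]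

lemma gradNormSq_twoModes (ha : ContDiff ℝ 1 a) (hb : ContDiff ℝ 1 b) (r t : ℝ) :
    gradNormSq (twoModes a b) (r, t) =
      (a t * (π * cos (π * r)) + b t * (2 * π * cos (2 * π * r))) ^ 2 +
        (deriv a t * sin (π * r) + deriv b t * sin (2 * π * r)) ^ 2 := by
  have hF := (contDiff_twoModes ha hb).differentiable one_ne_zero
  have hr : HasDerivAt (fun s => twoModes a b (s, t))
      (a t * (π * cos (π * r)) + b t * (2 * π * cos (2 * π * r))) r :=
    ((hasDerivAt_sin_mul π r).const_mul (a t)).add ((hasDerivAt_sin_mul (2 * π) r).const_mul (b t))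
  have ht : HasDerivAt (fun s => twoModes a b (r, s))
      (deriv a t * sin (π * r) + deriv b t * sin (2 * π * r)) t :=
    ((ha.differentiable one_ne_zero t).hasDerivAt.mul_const (sin (π * r))).add
      ((hb.differentiable one_ne_zero t).hasDerivAt.mul_const (sin (2 * π * r)))
  rw [gradNormSq, (hasDerivAt_partial_fst hF r t).unique hr,
    (hasDerivAt_partial_snd hF r t).unique ht]

lemma integral_energy_twoModes (ha : ContDiff ℝ 1 a) (hb : ContDiff ℝ 1 b) (t : ℝ) :
    ∫ r in (0 : ℝ)..1, (gradNormSq (twoModes a b) (r, t) - π ^ 2 * twoModes a b (r, t) ^ 2) =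
      (deriv a t ^ 2 + deriv b t ^ 2 + 3 * π ^ 2 * b t ^ 2) / 2 := by
  have hint {f : ℝ → ℝ} (hf : Continuous f) : IntervalIntegrable f volume 0 1 :=
    hf.intervalIntegrable 0 1
  calc ∫ r in (0 : ℝ)..1, (gradNormSq (twoModes a b) (r, t) - π ^ 2 * twoModes a b (r, t) ^ 2)
    _ = ∫ r in (0 : ℝ)..1, ((a t * π * cos (π * r) + b t * (2 * π) * cos (2 * π * r)) ^ 2
          + (deriv a t * sin (π * r) + deriv b t * sin (2 * π * r)) ^ 2
          - π ^ 2 * (a t * sin (π * r) + b t * sin (2 * π * r)) ^ 2) := by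
        simp only [gradNormSq_twoModes ha hb, twoModes, mul_assoc]
    _ = _ := by
        rw [intervalIntegral.integral_sub (hint (by fun_prop)) (hint (by fun_prop)),
          intervalIntegral.integral_add (hint (by fun_prop)) (hint (by fun_prop)),
          intervalIntegral.integral_const_mul, integral_cos_modes_sq, integral_sin_modes_sq,
          integral_sin_modes_sq]
        ring

lemma setIntegral_energy_twoModes (ha : ContDiff ℝ 1 a) (hb : ContDiff ℝ 1 b)
    (ha₀ : ∀ t ≤ 0, a t = a 0) (hb₀ : ∀ t ≤ 0, b t = b 0) {R : ℝ} (hR : 0 ≤ R) :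
    ∫ x in guideCorner R, (gradNormSq (twoModes a b) (foldCoord x) -
        π ^ 2 * twoModes a b (foldCoord x) ^ 2) =
      π / 2 * (-(8 / 3) * a 0 * b 0 + 3 * π ^ 2 / 4 * b 0 ^ 2) +
        ∫ t in 0..R, (deriv a t ^ 2 + deriv b t ^ 2 + 3 * π ^ 2 * b t ^ 2) := by
  have hF := contDiff_twoModes ha hb
  have hc := constOnNonpos_twoModes ha₀ hb₀
  have hgrad := hc.gradNormSq (hF.differentiable one_ne_zero)
  have hderiv {f : ℝ → ℝ} (hf : ContDiff ℝ 1 f) (hf₀ : ∀ t ≤ 0, f t = f 0) : deriv f 0 = 0 :=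
    eq_zero_of_hasDerivAt_of_const_nonpos (hf.differentiable one_ne_zero 0).hasDerivAt hf₀ le_rfl
  rw [setIntegral_guideCorner
    (G := fun p => gradNormSq (twoModes a b) p - π ^ 2 * twoModes a b p ^ 2)
    ((continuous_gradNormSq hF).sub (continuous_const.mul (hF.continuous.pow 2)))
    (fun r t ht => by simp only [hgrad r t ht, hc r t ht]) hR]
  simp only [integral_energy_twoModes ha hb, intervalIntegral.integral_div]
  simp only [gradNormSq_twoModes ha hb, twoModes, hderiv ha ha₀, hderiv hb hb₀, zero_mul, add_zero,
    ne_eq, OfNat.ofNat_ne_zero, not_false_eq_true, zero_pow]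
  rw [integral_mul_modes_energy, mul_div_cancel₀ _ two_ne_zero]

end TwoModes

/-! ### The trial function -/

section Cutoff

/-- A `C¹` cutoff equal to `1` on `(-∞, 0]`, to `(1 - t²)²` on `[0, 1]` and to `0` on `[1, ∞)`. -/
def cutoff (t : ℝ) : ℝ := (1 - t⁺ ^ 2)⁺ ^ 2

lemma hasDerivAt_cutoff (t : ℝ) : HasDerivAt cutoff (-4 * t⁺ * (1 - t⁺ ^ 2)⁺) t := by
  refine ((hasDerivAt_posPart_sq _).comp t ((hasDerivAt_posPart_sq t).const_sub 1)).congr_deriv ?_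
  ring

lemma contDiff_cutoff : ContDiff ℝ 1 cutoff := by
  refine contDiff_one_iff_deriv.2 ⟨fun t => (hasDerivAt_cutoff t).differentiableAt, ?_⟩
  rw [funext fun t => (hasDerivAt_cutoff t).deriv]
  have h : Continuous fun t : ℝ => t⁺ := continuous_posPart
  exact (continuous_const.mul h).mul (h.comp (continuous_const.sub (h.pow 2)))

lemma cutoff_of_nonpos {t : ℝ} (ht : t ≤ 0) : cutoff t = 1 := by
  simp [cutoff, posPart_eq_zero.2 ht]

lemma one_sub_posPart_sq_of_one_le {t : ℝ} (ht : 1 ≤ t) : (1 - t⁺ ^ 2)⁺ = 0 := by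
  rw [posPart_eq_self.2 (zero_le_one.trans ht), posPart_eq_zero, sub_nonpos]
  exact one_le_pow₀ ht

lemma cutoff_of_one_le {t : ℝ} (ht : 1 ≤ t) : cutoff t = 0 := by
  rw [cutoff, one_sub_posPart_sq_of_one_le ht, zero_pow two_ne_zero]

lemma deriv_cutoff_of_one_le {t : ℝ} (ht : 1 ≤ t) : deriv cutoff t = 0 := by
  rw [(hasDerivAt_cutoff t).deriv, one_sub_posPart_sq_of_one_le ht, mul_zero]

lemma one_sub_posPart_sq_of_mem_Icc {t : ℝ} (ht : t ∈ Icc 0 1) : (1 - t⁺ ^ 2)⁺ = 1 - t ^ 2 := by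
  rw [posPart_eq_self.2 ht.1, posPart_eq_self, sub_nonneg]
  exact pow_le_one₀ ht.1 ht.2

lemma cutoff_of_mem_Icc {t : ℝ} (ht : t ∈ Icc 0 1) : cutoff t = (1 - t ^ 2) ^ 2 := by
  rw [cutoff, one_sub_posPart_sq_of_mem_Icc ht]

lemma deriv_cutoff_of_mem_Icc {t : ℝ} (ht : t ∈ Icc 0 1) :
    deriv cutoff t = -4 * t * (1 - t ^ 2) := by
  rw [(hasDerivAt_cutoff t).deriv, one_sub_posPart_sq_of_mem_Icc ht, posPart_eq_self.2 ht.1]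

lemma integral_eq_integral_of_eq_zero_of_le {f : ℝ → ℝ} (hf : Continuous f) {a b c : ℝ}
    (hbc : b ≤ c) (hzero : ∀ t, b ≤ t → f t = 0) : ∫ t in a..c, f t = ∫ t in a..b, f t := by
  rw [← intervalIntegral.integral_add_adjacent_intervals (hf.intervalIntegrable a b)
    (hf.intervalIntegrable b c), add_eq_left]
  refine intervalIntegral.integral_zero_ae (.of_forall fun t ht => ?_)
  rw [uIoc_of_le hbc] at ht
  exact hzero t ht.1.le

lemma integral_cutoff_sq {R : ℝ} (hR : 1 ≤ R) : ∫ t in 0..R, cutoff t ^ 2 = 128 / 315 := by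
  rw [integral_eq_integral_of_eq_zero_of_le (f := fun t => cutoff t ^ 2)
    (contDiff_cutoff.continuous.pow 2) hR
    fun t ht => by rw [cutoff_of_one_le ht, zero_pow two_ne_zero]]
  have hpoly : EqOn (fun t => cutoff t ^ 2) (fun t => (1 - t ^ 2) ^ 4) (uIcc 0 1) := fun t ht => by
    rw [uIcc_of_le zero_le_one] at ht
    simp only [cutoff_of_mem_Icc ht]
    ring
  have hprim (t : ℝ) : HasDerivAt (fun t : ℝ => t - 4 / 3 * t ^ 3 + 6 / 5 * t ^ 5 - 4 / 7 * t ^ 7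
      + 1 / 9 * t ^ 9) ((1 - t ^ 2) ^ 4) t := by
    have hpow (n : ℕ) (k : ℝ) := (hasDerivAt_pow n t).const_mul k
    refine (((((hasDerivAt_id t).sub (hpow 3 _)).add (hpow 5 _)).sub (hpow 7 _)).add
      (hpow 9 _)).congr_deriv ?_
    push_cast
    ring
  rw [intervalIntegral.integral_congr hpoly, intervalIntegral.integral_eq_sub_of_hasDerivAt
    (fun t _ => hprim t) (Continuous.intervalIntegrable (by fun_prop) _ _)]
  norm_num

lemma integral_deriv_cutoff_sq {R : ℝ} (hR : 1 ≤ R) :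
    ∫ t in 0..R, deriv cutoff t ^ 2 = 128 / 105 := by
  rw [integral_eq_integral_of_eq_zero_of_le (f := fun t => deriv cutoff t ^ 2)
    ((contDiff_cutoff.continuous_deriv le_rfl).pow 2) hR
    fun t ht => by rw [deriv_cutoff_of_one_le ht, zero_pow two_ne_zero]]
  have hpoly : EqOn (fun t => deriv cutoff t ^ 2) (fun t => 16 * t ^ 2 * (1 - t ^ 2) ^ 2)
      (uIcc 0 1) := fun t ht => by
    rw [uIcc_of_le zero_le_one] at ht
    simp only [deriv_cutoff_of_mem_Icc ht]
    ring
  have hprim (t : ℝ) : HasDerivAt (fun t : ℝ => 16 / 3 * t ^ 3 - 32 / 5 * t ^ 5 + 16 / 7 * t ^ 7)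
      (16 * t ^ 2 * (1 - t ^ 2) ^ 2) t := by
    have hpow (n : ℕ) (k : ℝ) := (hasDerivAt_pow n t).const_mul k
    refine (((hpow 3 _).sub (hpow 5 _)).add (hpow 7 _)).congr_deriv ?_
    push_cast
    ring
  rw [intervalIntegral.integral_congr hpoly, intervalIntegral.integral_eq_sub_of_hasDerivAt
    (fun t _ => hprim t) (Continuous.intervalIntegrable (by fun_prop) _ _)]
  norm_num

lemma cutoff_div_of_nonpos {R t : ℝ} (hR : 0 ≤ R) (ht : t ≤ 0) : cutoff (t / R) = 1 :=
  cutoff_of_nonpos (div_nonpos_of_nonpos_of_nonneg ht hR)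

lemma contDiff_cutoff_div (R : ℝ) : ContDiff ℝ 1 fun t => cutoff (t / R) :=
  contDiff_cutoff.comp (contDiff_id.div_const R)

lemma deriv_cutoff_div (R t : ℝ) :
    deriv (fun s => cutoff (s / R)) t = deriv cutoff (t / R) / R := by
  have h := (contDiff_cutoff.differentiable one_ne_zero (t / R)).hasDerivAt.comp t
    ((hasDerivAt_id t).div_const R)
  rw [← mul_one_div]
  exact h.deriv

lemma integral_deriv_cutoff_div_sq {R : ℝ} (hR : 0 < R) :
    ∫ t in 0..R, deriv (fun s => cutoff (s / R)) t ^ 2 = 128 / 105 / R := by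
  simp only [deriv_cutoff_div, div_pow, intervalIntegral.integral_div]
  rw [intervalIntegral.integral_comp_div (fun t => deriv cutoff t ^ 2) hR.ne', zero_div,
    div_self hR.ne', integral_deriv_cutoff_sq le_rfl, smul_eq_mul]
  field_simp

end Cutoff

section Trial

variable {ε L : ℝ}

/-- The trial function in fold coordinates: the first mode is cut off at length `L`, and the
second, of amplitude `ε`, at length `1`. -/
def trialFunction (ε L : ℝ) : ℝ × ℝ → ℝ :=
  twoModes (fun t => cutoff (t / L)) fun t => ε * cutoff t

lemma contDiff_trialFunction : ContDiff ℝ 1 (trialFunction ε L) :=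
  contDiff_twoModes (contDiff_cutoff_div L) (contDiff_const.mul contDiff_cutoff)

lemma constOnNonpos_trialFunction (hL : 0 ≤ L) : ConstOnNonpos (trialFunction ε L) :=
  constOnNonpos_twoModes
    (fun t ht => by rw [cutoff_div_of_nonpos hL ht, cutoff_div_of_nonpos hL le_rfl])
    fun t ht => by rw [cutoff_of_nonpos ht, cutoff_of_nonpos le_rfl]

lemma trialFunction_zero_left (t : ℝ) : trialFunction ε L (0, t) = 0 := by
  simp [trialFunction, twoModes]

lemma trialFunction_one_left (t : ℝ) : trialFunction ε L (1, t) = 0 := by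
  simp [trialFunction, twoModes]

lemma trialFunction_right (hL : 1 ≤ L) (r : ℝ) : trialFunction ε L (r, L) = 0 := by
  simp [trialFunction, twoModes, cutoff_of_one_le, hL, (zero_lt_one.trans_le hL).ne']

lemma integral_axial_energy_trialFunction (hL : 1 ≤ L) :
    ∫ t in 0..L, (deriv (fun s => cutoff (s / L)) t ^ 2 +
      deriv (fun s => ε * cutoff s) t ^ 2 + 3 * π ^ 2 * (ε * cutoff t) ^ 2) =
      128 / 105 / L + (128 / 105 + 128 / 105 * π ^ 2) * ε ^ 2 := by
  have hc := contDiff_cutoff.continuous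
  have hc' := contDiff_cutoff.continuous_deriv le_rfl
  have hd := (contDiff_cutoff_div L).continuous_deriv le_rfl
  have hint {f : ℝ → ℝ} (hf : Continuous f) : IntervalIntegrable f volume 0 L :=
    hf.intervalIntegrable 0 L
  simp only [deriv_const_mul_field, mul_pow ε]
  rw [intervalIntegral.integral_add (hint (by fun_prop)) (hint (by fun_prop)),
    intervalIntegral.integral_add (hint (by fun_prop)) (hint (by fun_prop)),
    integral_deriv_cutoff_div_sq (zero_lt_one.trans_le hL), intervalIntegral.integral_const_mul,
    intervalIntegral.integral_const_mul, intervalIntegral.integral_const_mul,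
    integral_deriv_cutoff_sq hL, integral_cutoff_sq hL]
  ring

lemma setIntegral_energy_trialFunction (hL : 1 ≤ L) :
    ∫ x in guideCorner L, (gradNormSq (trialFunction ε L) (foldCoord x) -
        π ^ 2 * trialFunction ε L (foldCoord x) ^ 2) =
      128 / 105 / L - 4 * π / 3 * ε +
        (3 * π ^ 3 / 8 + 128 / 105 + 128 / 105 * π ^ 2) * ε ^ 2 := by
  have hL₀ : 0 ≤ L := zero_le_one.trans hL
  rw [trialFunction, setIntegral_energy_twoModes (contDiff_cutoff_div L)
    (contDiff_const.mul contDiff_cutoff)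
    (fun t ht => by rw [cutoff_div_of_nonpos hL₀ ht, cutoff_div_of_nonpos hL₀ le_rfl])
    (fun t ht => by rw [cutoff_of_nonpos ht, cutoff_of_nonpos le_rfl]) hL₀,
    integral_axial_energy_trialFunction hL, cutoff_div_of_nonpos hL₀ le_rfl,
    cutoff_of_nonpos le_rfl]
  ring

lemma setIntegral_energy_trialFunction_neg :
    ∫ x in guideCorner 10, (gradNormSq (trialFunction (1 / 10) 10) (foldCoord x) -
      π ^ 2 * trialFunction (1 / 10) 10 (foldCoord x) ^ 2) < 0 := by
  have hsq : π ^ 2 < 3.15 ^ 2 := pow_lt_pow_left₀ pi_lt_d2 pi_pos.le two_ne_zero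
  have hcube : π ^ 3 < 3.15 ^ 3 := pow_lt_pow_left₀ pi_lt_d2 pi_pos.le three_ne_zero
  rw [setIntegral_energy_trialFunction (by norm_num)]
  linarith [pi_gt_d2]

end Trial

lemma guideCorner_subset_GamSharp (R : ℝ) : guideCorner R ⊆ GamSharp :=
  fun _ hx => mem_GamSharp_of_quadDist hx.1.1 hx.1.2

lemma lamGamSharp_le {u : ℝ² → ℝ} (hu : ContDiff ℝ 1 u) (hcpt : HasCompactSupport u)
    (hsupp : tsupport u ⊆ GamSharp) (hne : ∫ x in GamSharp, u x ^ 2 ≠ 0) :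
    lamGamSharp ≤ (∫ x in GamSharp, ‖fderiv ℝ u x‖ ^ 2) / ∫ x in GamSharp, u x ^ 2 := by
  refine csInf_le ⟨0, ?_⟩ ⟨u, hu, hcpt, hsupp, hne, rfl⟩
  rintro _ ⟨v, -, -, -, -, rfl⟩
  positivity

/-- Theorem 5.1 ii, existence part: the Dirichlet Laplacian on the
rounded broken guide `Γ♯` has a bound state below `π²`: there exists a nonzero
`ψ ∈ H¹₀(Γ♯)` with `∫ |∇ψ|² < π² ∫ |ψ|²`; consequently `λ₁(Γ♯) < π²`. -/
theorem bound_state_GamSharp :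
    (∃ ψ : EuclideanSpace ℝ (Fin 2) → ℝ, ContDiff ℝ 1 ψ ∧ HasCompactSupport ψ ∧
      tsupport ψ ⊆ GamSharp ∧ (∫ x in GamSharp, (ψ x) ^ 2) ≠ 0 ∧
      (∫ x in GamSharp, ‖fderiv ℝ ψ x‖ ^ 2) < π ^ 2 * ∫ x in GamSharp, (ψ x) ^ 2) ∧
    lamGamSharp < π ^ 2 := by
  obtain ⟨ψ, hψ, hcpt, hsupp, hlt⟩ := exists_compactSupport_lt_of_energy_neg
    contDiff_trialFunction (constOnNonpos_trialFunction (by norm_num)) trialFunction_zero_left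
    trialFunction_one_left (trialFunction_right (by norm_num)) setIntegral_energy_trialFunction_neg
  replace hsupp : tsupport ψ ⊆ GamSharp := hsupp.trans (guideCorner_subset_GamSharp 10)
  have hψ_out : ∀ x ∉ GamSharp, ψ x ^ 2 = 0 := fun x hx => by
    rw [image_eq_zero_of_notMem_tsupport fun h => hx (hsupp h), zero_pow two_ne_zero]
  have hgrad_out : ∀ x ∉ GamSharp, ‖fderiv ℝ ψ x‖ ^ 2 = 0 := fun x hx => by
    rw [fderiv_of_notMem_tsupport ℝ fun h => hx (hsupp h), norm_zero, zero_pow two_ne_zero]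
  rw [← setIntegral_eq_integral_of_forall_compl_eq_zero hψ_out,
    ← setIntegral_eq_integral_of_forall_compl_eq_zero hgrad_out] at hlt
  have hpos : 0 < ∫ x in GamSharp, ψ x ^ 2 :=
    pos_of_mul_pos_right ((integral_nonneg fun x => sq_nonneg _).trans_lt hlt) (sq_nonneg π)
  exact ⟨⟨ψ, hψ, hcpt, hsupp, hpos.ne', hlt⟩,
    (lamGamSharp_le hψ hcpt hsupp hpos.ne').trans_lt ((div_lt_iff₀ hpos).2 hlt)⟩
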